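/- Let P̃₁, P̃₂ be non-deterministic random probability measures on X with the same mean measure P₀ satisfying Cov(P̃₁(A), P̃₂(A)) = η · P₀(A)(1 − P₀(A)) for all measurable A with η ∈ [−1,1] and Var(P̃ᵢ(A)) = λᵢ · P₀(A)(1 − P₀(A)) for all measurable A with λᵢ ∈ (0,1], i = 1,2. Let f : Y × X → [0,1] be a probability density kernel such that the family {f(·;x)}_x is identifiable. Then for every characteristic kernel k on Y × Y and every measurable set A ⊆ X such that P̃₁(A) and P̃₂(A) are not deterministic, Corr_k(f_{P̃₁}, f_{P̃₂}) = Corr_{k_f}(P̃₁, P̃₂) = Corr(P̃₁(A), P̃₂(A)). -/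

import Mathlib

/-!
Both kernel covariances have the form `E⟪∫ψ dP₁ - m, ∫ψ dP₂ - m⟫` for a bounded feature map `ψ` on
`X`: for `k_f` this is the given feature map, and for `k` and the mixtures Fubini gives
`ψ(x) = ∫ f(y;x) φ(y) dν(y)` (`integral_mixMeasure`), whose Gram kernel is again `k_f`
(`inner_mixFeature`).

Polarizing the assumption `Cov(P₁(A), P₂(A)) = η P₀(A)(1 - P₀(A))` identifies the symmetrization of
the measure `E[P₁ ⊗ P₂]` with `2(1 - η) P₀ ⊗ P₀ + 2η (x ↦ (x, x))_* P₀` (`integral_symm_identity`).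
Integrating the symmetric Gram kernel against it shows that the kernel covariance is `η V`, where
`V = ∫ k_f(x, x) dP₀ - ∫∫ k_f dP₀ dP₀` (`cov_embedding`). The same lemma with `P₁ = P₂` gives the
kernel variances `λᵢ V`. Hence every correlation in the statement equals `η / (√λ₁ √λ₂)`, as soon as
`V > 0`. If `V` vanished, the embedding of the mixture of `P₁` would be almost surely constant;
since `k` is characteristic and `f` identifiable, `P₁` would be almost surely equal to `P₀`.
-/

open MeasureTheory ProbabilityTheory Filter
open scoped RealInnerProductSpace ENNReal NNReal

noncomputable section

/-- A positive-definite function `k`. -/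
def IsPosDef {X : Type*} (k : X → X → ℝ) : Prop :=
  ∀ (n : ℕ) (x : Fin n → X) (c : Fin n → ℝ),
    0 ≤ ∑ i : Fin n, ∑ j : Fin n, c i * c j * k (x i) (x j)

/-- A bounded, measurable, symmetric, positive-definite kernel. -/
structure IsKernel {X : Type*} [MeasurableSpace X] (k : X → X → ℝ) : Prop where
  measurable : Measurable (Function.uncurry k)
  bounded : ∃ C : ℝ, ∀ x y, |k x y| ≤ C
  symm : ∀ x y, k x y = k y x
  posDef : IsPosDef k

/-- A realization of the reproducing kernel Hilbert space of `k`: a Hilbert space together with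
a feature map reproducing `k` whose feature vectors span a dense subspace. -/
structure FeatureMap {X : Type*} [MeasurableSpace X] (k : X → X → ℝ)
    (H : Type*) [NormedAddCommGroup H] [InnerProductSpace ℝ H] : Type _ where
  toFun : X → H
  stronglyMeasurable : StronglyMeasurable toFun
  repro : ∀ x y, ⟪toFun x, toFun y⟫ = k x y
  dense_span : Dense (Submodule.span ℝ (Set.range toFun) : Set H)

/-- Kernel mean embedding of a measure, as a Bochner integral of the feature map. -/
def meanEmb {X : Type*} [MeasurableSpace X] {k : X → X → ℝ} {H : Type*}
    [NormedAddCommGroup H] [InnerProductSpace ℝ H] [CompleteSpace H]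
    (F : FeatureMap k H) (μ : Measure X) : H :=
  ∫ x, F.toFun x ∂μ

/-- Kernel covariance of two random probability measures,
`Cov_k(P₁,P₂) = E[⟪μ_k(P₁) - E[μ_k(P₁)], μ_k(P₂) - E[μ_k(P₂)]⟫]`. -/
def kerCov {X : Type*} [MeasurableSpace X] {k : X → X → ℝ} {H : Type*}
    [NormedAddCommGroup H] [InnerProductSpace ℝ H] [CompleteSpace H]
    {Ω : Type*} [MeasurableSpace Ω]
    (F : FeatureMap k H) (Pr : Measure Ω) (P₁ P₂ : Ω → Measure X) : ℝ :=
  ∫ ω, ⟪meanEmb F (P₁ ω) - ∫ ω', meanEmb F (P₁ ω') ∂Pr,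
        meanEmb F (P₂ ω) - ∫ ω', meanEmb F (P₂ ω') ∂Pr⟫ ∂Pr

/-- Kernel variance of a random probability measure. -/
def kerVar {X : Type*} [MeasurableSpace X] {k : X → X → ℝ} {H : Type*}
    [NormedAddCommGroup H] [InnerProductSpace ℝ H] [CompleteSpace H]
    {Ω : Type*} [MeasurableSpace Ω]
    (F : FeatureMap k H) (Pr : Measure Ω) (P : Ω → Measure X) : ℝ :=
  kerCov F Pr P P

/-- Kernel correlation of two random probability measures. -/
def kerCorr {X : Type*} [MeasurableSpace X] {k : X → X → ℝ} {H : Type*}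
    [NormedAddCommGroup H] [InnerProductSpace ℝ H] [CompleteSpace H]
    {Ω : Type*} [MeasurableSpace Ω]
    (F : FeatureMap k H) (Pr : Measure Ω) (P₁ P₂ : Ω → Measure X) : ℝ :=
  kerCov F Pr P₁ P₂ / (Real.sqrt (kerVar F Pr P₁) * Real.sqrt (kerVar F Pr P₂))

/-- Covariance of two real random variables. -/
def rCov {Ω : Type*} [MeasurableSpace Ω] (Pr : Measure Ω) (U V : Ω → ℝ) : ℝ :=
  ∫ ω, (U ω - ∫ ω', U ω' ∂Pr) * (V ω - ∫ ω', V ω' ∂Pr) ∂Pr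

/-- Variance of a real random variable. -/
def rVar {Ω : Type*} [MeasurableSpace Ω] (Pr : Measure Ω) (U : Ω → ℝ) : ℝ :=
  rCov Pr U U

/-- Pearson correlation of two real random variables. -/
def rCorr {Ω : Type*} [MeasurableSpace Ω] (Pr : Measure Ω) (U V : Ω → ℝ) : ℝ :=
  rCov Pr U V / (Real.sqrt (rVar Pr U) * Real.sqrt (rVar Pr V))

end

noncomputable section

/-- A probability density kernel `f : Y × X → [0,1]` with respect to the reference
measure `ν` on `Y`. -/
structure IsDensityKernel {Y X : Type*} [MeasurableSpace Y] [MeasurableSpace X]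
    (ν : Measure Y) (f : Y → X → ℝ) : Prop where
  measurable : Measurable (Function.uncurry f)
  nonneg : ∀ y x, 0 ≤ f y x
  le_one : ∀ y x, f y x ≤ 1
  integral_one : ∀ x, ∫ y, f y x ∂ν = 1

/-- The mixture density `f_P(y) = ∫ f(y;x) dP(x)`. -/
def mixDensity {Y X : Type*} [MeasurableSpace X] (f : Y → X → ℝ) (P : Measure X) :
    Y → ℝ := fun y => ∫ x, f y x ∂P

/-- The mixture measure on `Y` with density `f_P` with respect to `ν`. -/
def mixMeasure {Y X : Type*} [MeasurableSpace Y] [MeasurableSpace X]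
    (ν : Measure Y) (f : Y → X → ℝ) (P : Measure X) : Measure Y :=
  ν.withDensity fun y => ENNReal.ofReal (mixDensity f P y)

/-- The updated kernel `k_f(x₁,x₂) = ∬ k(y₁,y₂) f(y₁;x₁) f(y₂;x₂) dy₁ dy₂`. -/
def updatedKernel {Y X : Type*} [MeasurableSpace Y] (ν : Measure Y)
    (k : Y → Y → ℝ) (f : Y → X → ℝ) : X → X → ℝ := fun x₁ x₂ =>
  ∫ y₁, ∫ y₂, k y₁ y₂ * f y₁ x₁ * f y₂ x₂ ∂ν ∂ν

/-- The family `{f(·;x)}ₓ` is identifiable: mixtures determine the mixing measure. -/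
def Identifiable {Y X : Type*} [MeasurableSpace Y] [MeasurableSpace X]
    (ν : Measure Y) (f : Y → X → ℝ) : Prop :=
  ∀ P₁ P₂ : Measure X, IsProbabilityMeasure P₁ → IsProbabilityMeasure P₂ →
    mixDensity f P₁ =ᵐ[ν] mixDensity f P₂ → P₁ = P₂

/-- A kernel is characteristic if the kernel mean embedding
`μ ↦ (y ↦ ∫ k(x,y) dμ(x))` is injective on probability measures. -/
def IsCharacteristic {Z : Type*} [MeasurableSpace Z] (k : Z → Z → ℝ) : Prop :=
  ∀ μ₁ μ₂ : Measure Z, IsProbabilityMeasure μ₁ → IsProbabilityMeasure μ₂ →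
    (∀ y, ∫ x, k x y ∂μ₁ = ∫ x, k x y ∂μ₂) → μ₁ = μ₂

end

noncomputable section

/-! ### Covariance of mean embeddings -/

/-- Expectation of an integral against a random measure. -/
lemma integral_bind_kernel {Ω X E : Type*} [MeasurableSpace Ω] [MeasurableSpace X]
    [NormedAddCommGroup E] [NormedSpace ℝ E] (Pr : Measure Ω) [IsProbabilityMeasure Pr]
    (κ : Kernel Ω X) {φ : X → E} (hφ : Integrable φ (Pr.bind κ)) :
    ∫ x, φ x ∂(Pr.bind κ) = ∫ ω, ∫ x, φ x ∂(κ ω) ∂Pr := by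
  rw [Measure.comp_eq_comp_const_apply] at hφ ⊢
  rw [Kernel.integral_comp hφ, Kernel.const_apply]

lemma integrable_of_bdd {X E : Type*} [MeasurableSpace X] [NormedAddCommGroup E]
    {μ : Measure X} [IsFiniteMeasure μ] {φ : X → E} (hφ : StronglyMeasurable φ)
    {C : ℝ} (hC : ∀ x, ‖φ x‖ ≤ C) : Integrable φ μ :=
  Integrable.of_bound hφ.aestronglyMeasurable C (Eventually.of_forall hC)

lemma norm_integral_le_bdd {X E : Type*} [MeasurableSpace X] [NormedAddCommGroup E]
    [NormedSpace ℝ E] {μ : Measure X} [IsProbabilityMeasure μ] {φ : X → E}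
    {C : ℝ} (hC : ∀ x, ‖φ x‖ ≤ C) : ‖∫ x, φ x ∂μ‖ ≤ C := by
  simpa using norm_integral_le_of_norm_le_const (μ := μ) (Eventually.of_forall hC)

/-- `E⟪U - u, V - v⟫ = E⟪U, V⟫ - ⟪u, v⟫` for bounded random vectors with means `u`, `v`. -/
lemma integral_inner_sub_mean {Ω E : Type*} [MeasurableSpace Ω]
    [NormedAddCommGroup E] [InnerProductSpace ℝ E] [CompleteSpace E]
    (Pr : Measure Ω) [IsProbabilityMeasure Pr] {U V : Ω → E}
    (hU : StronglyMeasurable U) (hV : StronglyMeasurable V) {C : ℝ}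
    (hUC : ∀ ω, ‖U ω‖ ≤ C) (hVC : ∀ ω, ‖V ω‖ ≤ C) :
    ∫ ω, ⟪U ω - ∫ ω', U ω' ∂Pr, V ω - ∫ ω', V ω' ∂Pr⟫ ∂Pr
      = ∫ ω, ⟪U ω, V ω⟫ ∂Pr - ⟪∫ ω', U ω' ∂Pr, ∫ ω', V ω' ∂Pr⟫ := by
  have iU : Integrable U Pr := integrable_of_bdd hU hUC
  have iV : Integrable V Pr := integrable_of_bdd hV hVC
  set u := ∫ ω', U ω' ∂Pr with hu
  set v := ∫ ω', V ω' ∂Pr with hv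
  have iUV : Integrable (fun ω => ⟪U ω, V ω⟫) Pr := by
    refine Integrable.of_bound (hU.inner hV).aestronglyMeasurable (C * C)
      (Eventually.of_forall fun ω => ?_)
    exact (norm_inner_le_norm _ _).trans
      (mul_le_mul (hUC ω) (hVC ω) (norm_nonneg _) ((norm_nonneg _).trans (hUC ω)))
  have iu : Integrable (fun ω => ⟪u, V ω⟫) Pr := iV.const_inner u
  have iv : Integrable (fun ω => ⟪v, U ω⟫) Pr := iU.const_inner v
  have e : ∀ ω, ⟪U ω - u, V ω - v⟫ = ⟪U ω, V ω⟫ - ⟪v, U ω⟫ - ⟪u, V ω⟫ + ⟪u, v⟫ := by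
    intro ω
    rw [inner_sub_left, inner_sub_right, inner_sub_right, real_inner_comm (U ω) v]
    ring
  have i₁ : Integrable (fun ω => ⟪U ω, V ω⟫ - ⟪v, U ω⟫) Pr := iUV.sub iv
  have i₂ : Integrable (fun ω => ⟪U ω, V ω⟫ - ⟪v, U ω⟫ - ⟪u, V ω⟫) Pr := i₁.sub iu
  simp_rw [e]
  rw [integral_add i₂ (integrable_const _), integral_sub i₁ iu,
    integral_sub iUV iv, integral_inner iV, integral_inner iU, ← hu, ← hv,
    real_inner_comm u v]
  simp

lemma inner_integral_prod {X E : Type*} [MeasurableSpace X]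
    [NormedAddCommGroup E] [InnerProductSpace ℝ E] [CompleteSpace E]
    (μ μ' : Measure X) [IsProbabilityMeasure μ] [IsProbabilityMeasure μ'] {ψ : X → E}
    (hψ : Integrable ψ μ) (hψ' : Integrable ψ μ') :
    ⟪∫ x, ψ x ∂μ, ∫ x, ψ x ∂μ'⟫ = ∫ z, ⟪ψ z.1, ψ z.2⟫ ∂(μ.prod μ') :=
  (integral_prod_bilin (innerSL ℝ) hψ hψ').symm

/-- Polarization: if `M` agrees on squares `A × A` with the combination of `P₀ ⊗ P₀` and of the
image of `P₀` on the diagonal with weights `1 - η` and `η`, then its symmetrization agrees on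
rectangles with twice that combination. For disjoint sets this follows by expanding the square of
the union; in general `A` and `B` are split along `A ∩ B`. It is applied to `M = E[κ₁ ⊗ κ₂]`,
for which the hypothesis on squares is the covariance assumption. -/
lemma rectangle_identity {X : Type*} [MeasurableSpace X] (M : Measure (X × X)) [IsFiniteMeasure M]
    (P₀ : Measure X) [IsFiniteMeasure P₀] (η : ℝ)
    (h : ∀ A, MeasurableSet A →
      M.real (A ×ˢ A) = (1 - η) * (P₀.real A * P₀.real A) + η * P₀.real A)
    {A B : Set X} (hA : MeasurableSet A) (hB : MeasurableSet B) :
    M.real (A ×ˢ B) + M.real (B ×ˢ A)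
      = 2 * (1 - η) * (P₀.real A * P₀.real B) + 2 * η * P₀.real (A ∩ B) := by
  have addL : ∀ S T U : Set X, Disjoint S T → MeasurableSet T → MeasurableSet U →
      M.real ((S ∪ T) ×ˢ U) = M.real (S ×ˢ U) + M.real (T ×ˢ U) := by
    intro S T U hd hT hU
    rw [Set.union_prod, measureReal_union (Set.Disjoint.set_prod_left hd _ _) (hT.prod hU)]
  have addR : ∀ S T U : Set X, Disjoint S T → MeasurableSet T → MeasurableSet U →
      M.real (U ×ˢ (S ∪ T)) = M.real (U ×ˢ S) + M.real (U ×ˢ T) := by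
    intro S T U hd hT hU
    rw [Set.prod_union, measureReal_union (Set.Disjoint.set_prod_right hd _ _) (hU.prod hT)]
  have disj : ∀ S T : Set X, Disjoint S T → MeasurableSet S → MeasurableSet T →
      M.real (S ×ˢ T) + M.real (T ×ˢ S) = 2 * (1 - η) * (P₀.real S * P₀.real T) := by
    intro S T hd hS hT
    have h1 := h _ (hS.union hT)
    rw [addL S T _ hd hT (hS.union hT), addR S T _ hd hT hS, addR S T _ hd hT hT,
      measureReal_union hd hT, h S hS, h T hT] at h1
    linarith
  have mI := hA.inter hB
  have mA := hA.diff hB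
  have mB := hB.diff hA
  have dA : Disjoint (A ∩ B) (A \ B) := Set.disjoint_sdiff_inter.symm
  have dB : Disjoint (A ∩ B) (B \ A) := by
    rw [Set.inter_comm]; exact Set.disjoint_sdiff_inter.symm
  have dAB : Disjoint (A \ B) (B \ A) := disjoint_sdiff_sdiff
  have eA : (A ∩ B) ∪ (A \ B) = A := Set.inter_union_sdiff A B
  have eB : (A ∩ B) ∪ (B \ A) = B := by rw [Set.inter_comm]; exact Set.inter_union_sdiff B A
  have pA : P₀.real A = P₀.real (A ∩ B) + P₀.real (A \ B) := by
    rw [← measureReal_union dA mA, eA]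
  have pB : P₀.real B = P₀.real (A ∩ B) + P₀.real (B \ A) := by
    rw [← measureReal_union dB mB, eB]
  have q1 := addL _ _ B dA mA hB
  have q2 := addR _ _ (A ∩ B) dB mB mI
  have q3 := addR _ _ (A \ B) dB mB mA
  have q4 := addL _ _ A dB mB hA
  have q5 := addR _ _ (A ∩ B) dA mA mI
  have q6 := addR _ _ (B \ A) dA mA mB
  rw [eA] at q1 q5 q6
  rw [eB] at q2 q3 q4
  have r1 := disj _ _ dA mI mA
  have r2 := disj _ _ dB mI mB
  have r3 := disj _ _ dAB mA mB
  have r4 := h _ mI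
  rw [q1, q2, q3, q4, q5, q6, pA, pB]
  linear_combination r1 + r2 + r3 + 2 * r4

/-- Integrated form of `rectangle_identity`: the symmetrized measure is finite and
hence determined by its values on rectangles. The negative part of `η` is moved to the
other side so that all measures involved are nonnegative. -/
lemma integral_symm_identity {X : Type*} [MeasurableSpace X] (M : Measure (X × X))
    [IsFiniteMeasure M] (P₀ : Measure X) [IsFiniteMeasure P₀] (η : ℝ) (hη : η ≤ 1)
    (h : ∀ A, MeasurableSet A →
      M.real (A ×ˢ A) = (1 - η) * (P₀.real A * P₀.real A) + η * P₀.real A)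
    {K : X × X → ℝ} (hK : StronglyMeasurable K) (hsymm : ∀ x y, K (x, y) = K (y, x))
    {C : ℝ} (hC : ∀ z, ‖K z‖ ≤ C) :
    ∫ z, K z ∂M = (1 - η) * ∫ z, K z ∂(P₀.prod P₀) + η * ∫ x, K (x, x) ∂P₀ := by
  have mdiag : Measurable (fun x : X => (x, x)) := measurable_id.prodMk measurable_id
  set D := P₀.map (fun x => (x, x)) with hD
  have hDr : ∀ {A B : Set X}, MeasurableSet A → MeasurableSet B →
      D.real (A ×ˢ B) = P₀.real (A ∩ B) := by
    intro A B hA hB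
    rw [hD, map_measureReal_apply mdiag (hA.prod hB)]
    rfl
  obtain ⟨a, b, c, hab, hc⟩ : ∃ a b c : ℝ≥0, (a : ℝ) - b = η ∧ (c : ℝ) = 1 - η :=
    ⟨η.toNNReal, (-η).toNNReal, (1 - η).toNNReal, by
      rw [Real.coe_toNNReal', Real.coe_toNNReal', max_zero_sub_max_neg_zero_eq_self],
      Real.coe_toNNReal _ (by linarith)⟩
  have key : M + M.map Prod.swap + (2 * b) • D = (2 * c) • (P₀.prod P₀) + (2 * a) • D := by
    refine Measure.ext_prod fun {A B} hA hB => ?_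
    rw [← measureReal_eq_measureReal_iff]
    have e : (M.map Prod.swap).real (A ×ˢ B) = M.real (B ×ˢ A) := by
      rw [map_measureReal_apply measurable_swap (hA.prod hB), Set.preimage_swap_prod]
    have := rectangle_identity M P₀ η h hA hB
    rw [measureReal_add_apply, measureReal_add_apply, measureReal_add_apply, e,
      measureReal_nnreal_smul_apply, measureReal_nnreal_smul_apply,
      measureReal_nnreal_smul_apply, hDr hA hB, measureReal_prod_prod, this]
    push_cast
    rw [hc, ← hab]
    ring
  have iK : ∀ (μ : Measure (X × X)) [IsFiniteMeasure μ], Integrable K μ :=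
    fun μ _ => integrable_of_bdd hK hC
  have h1 : ∫ z, K z ∂(M + M.map Prod.swap + (2 * b) • D)
      = ∫ z, K z ∂((2 * c) • (P₀.prod P₀) + (2 * a) • D) := by rw [key]
  have e1 : ∫ z, K z ∂(M.map Prod.swap) = ∫ z, K z ∂M := by
    rw [integral_map measurable_swap.aemeasurable hK.aestronglyMeasurable]
    exact integral_congr_ae (Eventually.of_forall fun z => hsymm _ _)
  have e2 : ∫ z, K z ∂D = ∫ x, K (x, x) ∂P₀ :=
    integral_map mdiag.aemeasurable hK.aestronglyMeasurable
  rw [integral_add_measure (iK _) (iK _), integral_add_measure (iK _) (iK _),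
    integral_add_measure (iK _) (iK _), integral_smul_nnreal_measure,
    integral_smul_nnreal_measure, integral_smul_nnreal_measure, e1, e2] at h1
  simp only [NNReal.smul_def, smul_eq_mul] at h1
  push_cast at h1
  rw [hc] at h1
  rw [← hab] at h1 ⊢
  linarith

/-- Kernel covariance formula: if `Cov(κ₁(A), κ₂(A)) = η P₀(A)(1 - P₀(A))` for all `A`, the
covariance of the mean embeddings under a bounded feature map `ψ` is the same multiple `η` of
a quantity that depends only on `P₀` and on the Gram kernel of `ψ`. -/
lemma cov_embedding {Ω X E : Type*} [MeasurableSpace Ω] [MeasurableSpace X]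
    [NormedAddCommGroup E] [InnerProductSpace ℝ E] [CompleteSpace E]
    (Pr : Measure Ω) [IsProbabilityMeasure Pr] (κ₁ κ₂ : Kernel Ω X)
    [IsMarkovKernel κ₁] [IsMarkovKernel κ₂] (P₀ : Measure X)
    (h₁ : Pr.bind κ₁ = P₀) (h₂ : Pr.bind κ₂ = P₀) (η : ℝ) (hη : η ≤ 1)
    (hcov : ∀ A : Set X, MeasurableSet A →
      rCov Pr (fun ω => (κ₁ ω A).toReal) (fun ω => (κ₂ ω A).toReal)
        = η * ((P₀ A).toReal * (1 - (P₀ A).toReal)))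
    {ψ : X → E} (hψ : StronglyMeasurable ψ) {C : ℝ} (hC : ∀ x, ‖ψ x‖ ≤ C) :
    ∫ ω, ⟪∫ x, ψ x ∂(κ₁ ω) - ∫ ω', ∫ x, ψ x ∂(κ₁ ω') ∂Pr,
        ∫ x, ψ x ∂(κ₂ ω) - ∫ ω', ∫ x, ψ x ∂(κ₂ ω') ∂Pr⟫ ∂Pr
      = η * (∫ x, ⟪ψ x, ψ x⟫ ∂P₀ - ∫ z, ⟪ψ z.1, ψ z.2⟫ ∂(P₀.prod P₀)) := by
  have hP₀ : IsProbabilityMeasure P₀ := by rw [← h₁]; infer_instance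
  have bindE : ∀ {F : Type _} [NormedAddCommGroup F] [NormedSpace ℝ F] {φ : X → F} {c : ℝ},
      StronglyMeasurable φ → (∀ x, ‖φ x‖ ≤ c) →
      ∫ ω, ∫ x, φ x ∂(κ₁ ω) ∂Pr = ∫ x, φ x ∂P₀ ∧
        ∫ ω, ∫ x, φ x ∂(κ₂ ω) ∂Pr = ∫ x, φ x ∂P₀ := by
    intro F _ _ φ c hφ hc
    constructor
    · rw [← integral_bind_kernel Pr κ₁ (integrable_of_bdd hφ hc), h₁]
    · rw [← integral_bind_kernel Pr κ₂ (integrable_of_bdd hφ hc), h₂]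
  set M : Measure (X × X) := Pr.bind (κ₁ ×ₖ κ₂) with hM
  have hMA : ∀ A, MeasurableSet A →
      M.real (A ×ˢ A) = (1 - η) * (P₀.real A * P₀.real A) + η * P₀.real A := by
    intro A hA
    have eM : M.real (A ×ˢ A) = ∫ ω, (κ₁ ω A).toReal * (κ₂ ω A).toReal ∂Pr := by
      rw [Measure.real, hM, Measure.bind_apply (hA.prod hA) (Kernel.measurable _).aemeasurable,
        ← integral_toReal (Kernel.measurable_coe _ (hA.prod hA)).aemeasurable
          (Eventually.of_forall fun ω => measure_lt_top _ _)]
      simp_rw [Kernel.prod_apply_prod, ENNReal.toReal_mul]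
    have mean : ∀ (κ : Kernel Ω X) [IsMarkovKernel κ], Pr.bind κ = P₀ →
        ∫ ω, (κ ω A).toReal ∂Pr = P₀.real A := by
      intro κ _ h
      rw [Measure.real, ← h, Measure.bind_apply hA (Kernel.measurable _).aemeasurable,
        ← integral_toReal (Kernel.measurable_coe _ hA).aemeasurable
          (Eventually.of_forall fun ω => measure_lt_top _ _)]
    have bd : ∀ (κ : Kernel Ω X) [IsMarkovKernel κ] (ω : Ω), ‖(κ ω A).toReal‖ ≤ 1 := by
      intro κ _ ω
      rw [Real.norm_of_nonneg ENNReal.toReal_nonneg]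
      exact measureReal_le_one
    have ms : ∀ (κ : Kernel Ω X), StronglyMeasurable fun ω => (κ ω A).toReal := fun κ =>
      (κ.measurable_coe hA).ennreal_toReal.stronglyMeasurable
    have hi := integral_inner_sub_mean Pr (ms κ₁) (ms κ₂) (bd κ₁) (bd κ₂)
    have hc := hcov A hA
    simp only [rCov] at hc
    simp only [RCLike.inner_apply, conj_trivial] at hi
    rw [mean κ₁ h₁, mean κ₂ h₂] at hc hi
    change _ = η * (P₀.real A * (1 - P₀.real A)) at hc
    have e : ∫ ω, ((κ₂ ω A).toReal - P₀.real A) * ((κ₁ ω A).toReal - P₀.real A) ∂Pr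
        = ∫ ω, ((κ₁ ω A).toReal - P₀.real A) * ((κ₂ ω A).toReal - P₀.real A) ∂Pr :=
      integral_congr_ae (Eventually.of_forall fun ω => mul_comm _ _)
    have e' : ∫ ω, (κ₂ ω A).toReal * (κ₁ ω A).toReal ∂Pr = M.real (A ×ˢ A) := by
      rw [eM]
      exact integral_congr_ae (Eventually.of_forall fun ω => mul_comm _ _)
    rw [e, e', hc] at hi
    linarith
  have hK : StronglyMeasurable fun z : X × X => ⟪ψ z.1, ψ z.2⟫ :=
    (hψ.comp_measurable measurable_fst).inner (hψ.comp_measurable measurable_snd)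
  have hKC : ∀ z : X × X, ‖⟪ψ z.1, ψ z.2⟫‖ ≤ C * C := fun z =>
    (norm_inner_le_norm _ _).trans
      (mul_le_mul (hC _) (hC _) (norm_nonneg _) ((norm_nonneg _).trans (hC z.1)))
  have eInt : ∫ ω, ⟪∫ x, ψ x ∂(κ₁ ω), ∫ x, ψ x ∂(κ₂ ω)⟫ ∂Pr = ∫ z, ⟪ψ z.1, ψ z.2⟫ ∂M := by
    rw [hM, integral_bind_kernel Pr _ (integrable_of_bdd hK hKC)]
    refine integral_congr_ae (Eventually.of_forall fun ω => ?_)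
    simp only [Kernel.prod_apply]
    exact inner_integral_prod _ _ (integrable_of_bdd hψ hC) (integrable_of_bdd hψ hC)
  rw [integral_inner_sub_mean Pr hψ.integral_kernel hψ.integral_kernel
    (fun ω => norm_integral_le_bdd hC) (fun ω => norm_integral_le_bdd hC), eInt,
    (bindE hψ hC).1, (bindE hψ hC).2,
    inner_integral_prod _ _ (integrable_of_bdd hψ hC) (integrable_of_bdd hψ hC),
    integral_symm_identity M P₀ η hη hMA hK (fun x y => real_inner_comm _ _) hKC]
  ring

/-! ### Embedding of mixtures -/

section MixtureEmbedding

variable {X Y H : Type*} [MeasurableSpace X] [MeasurableSpace Y]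
  [NormedAddCommGroup H] [InnerProductSpace ℝ H]

/-- The feature map `x ↦ ∫ f(y;x) φ(y) dν(y)` on `X` obtained by averaging a feature map `φ`
on `Y` against the densities `f(·;x)`; its Gram kernel is the updated kernel `k_f`. -/
def mixFeature (ν : Measure Y) (f : Y → X → ℝ) (φ : Y → H) (x : X) : H :=
  ∫ y, f y x • φ y ∂ν

variable {ν : Measure Y} {f : Y → X → ℝ} {φ : Y → H} {C : ℝ}

lemma IsDensityKernel.integrable (hf : IsDensityKernel ν f) (x : X) :
    Integrable (fun y => f y x) ν := by
  by_contra h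
  have := hf.integral_one x
  -- a non-integrable function would have Bochner integral `0`
  rw [integral_undef h] at this
  exact zero_ne_one this

lemma IsDensityKernel.smul_stronglyMeasurable (hf : IsDensityKernel ν f)
    (hφ : StronglyMeasurable φ) :
    StronglyMeasurable (fun z : Y × X => f z.1 z.2 • φ z.1) :=
  hf.measurable.stronglyMeasurable.smul (hφ.comp_measurable measurable_fst)

lemma IsDensityKernel.smul_integrable (hf : IsDensityKernel ν f)
    (hφ : StronglyMeasurable φ) (hC : ∀ y, ‖φ y‖ ≤ C) (x : X) :
    Integrable (fun y => f y x • φ y) ν := by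
  refine ((hf.integrable x).const_mul C).mono'
    ((hf.smul_stronglyMeasurable hφ).comp_measurable
      (measurable_id.prodMk measurable_const)).aestronglyMeasurable
    (Eventually.of_forall fun y => ?_)
  rw [norm_smul, Real.norm_of_nonneg (hf.nonneg y x), mul_comm]
  exact mul_le_mul_of_nonneg_right (hC y) (hf.nonneg y x)

lemma IsDensityKernel.integral_norm_smul_le (hf : IsDensityKernel ν f)
    (hφ : StronglyMeasurable φ) (hC : ∀ y, ‖φ y‖ ≤ C) (x : X) :
    ∫ y, ‖f y x • φ y‖ ∂ν ≤ C := by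
  have h : ∫ y, ‖f y x • φ y‖ ∂ν ≤ ∫ y, C * f y x ∂ν := by
    refine integral_mono (hf.smul_integrable hφ hC x).norm ((hf.integrable x).const_mul C) ?_
    intro y
    simp only [norm_smul, Real.norm_of_nonneg (hf.nonneg y x)]
    rw [mul_comm]
    exact mul_le_mul_of_nonneg_right (hC y) (hf.nonneg y x)
  rwa [integral_const_mul, hf.integral_one, mul_one] at h

lemma norm_mixFeature_le (hf : IsDensityKernel ν f) (hφ : StronglyMeasurable φ)
    (hC : ∀ y, ‖φ y‖ ≤ C) (x : X) : ‖mixFeature ν f φ x‖ ≤ C :=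
  (norm_integral_le_integral_norm _).trans (hf.integral_norm_smul_le hφ hC x)

lemma mixDensity_nonneg (hf : IsDensityKernel ν f) (P : Measure X) (y : Y) :
    0 ≤ mixDensity f P y := integral_nonneg fun x => hf.nonneg y x

lemma mixDensity_measurable (hf : IsDensityKernel ν f) (P : Measure X) [IsProbabilityMeasure P] :
    Measurable (mixDensity f P) :=
  (hf.measurable.stronglyMeasurable.integral_prod_right' (ν := P)).measurable

/-- The averaged feature map has the updated kernel as its Gram kernel. -/
lemma inner_mixFeature [CompleteSpace H] {k : Y → Y → ℝ} (F : FeatureMap k H) (hf : IsDensityKernel ν f)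
    (hC : ∀ y, ‖F.toFun y‖ ≤ C) (x₁ x₂ : X) :
    ⟪mixFeature ν f F.toFun x₁, mixFeature ν f F.toFun x₂⟫ = updatedKernel ν k f x₁ x₂ := by
  have h1 := hf.smul_integrable F.stronglyMeasurable hC x₁
  have h2 := hf.smul_integrable F.stronglyMeasurable hC x₂
  rw [real_inner_comm]
  conv_lhs => rw [mixFeature.eq_1 ν f F.toFun x₁]
  rw [← integral_inner h1, updatedKernel]
  refine integral_congr_ae (Eventually.of_forall fun y₁ => ?_)
  simp only
  rw [real_inner_comm, mixFeature, ← integral_inner h2]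
  refine integral_congr_ae (Eventually.of_forall fun y₂ => ?_)
  simp only [real_inner_smul_left, real_inner_smul_right, F.repro]
  ring

variable [SigmaFinite ν]

lemma mixFeature_stronglyMeasurable (hf : IsDensityKernel ν f) (hφ : StronglyMeasurable φ) :
    StronglyMeasurable (mixFeature ν f φ) :=
  (hf.smul_stronglyMeasurable hφ).integral_prod_left'

lemma IsDensityKernel.integrable_prod (hf : IsDensityKernel ν f)
    (hφ : StronglyMeasurable φ) (hC : ∀ y, ‖φ y‖ ≤ C) (P : Measure X) [IsProbabilityMeasure P] :
    Integrable (fun z : Y × X => f z.1 z.2 • φ z.1) (ν.prod P) := by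
  have hm := hf.smul_stronglyMeasurable hφ
  rw [integrable_prod_iff' hm.aestronglyMeasurable]
  refine ⟨Eventually.of_forall fun x => hf.smul_integrable hφ hC x, ?_⟩
  refine Integrable.of_bound hm.norm.integral_prod_left'.aestronglyMeasurable C
    (Eventually.of_forall fun x => ?_)
  rw [Real.norm_of_nonneg (integral_nonneg fun y => norm_nonneg _)]
  exact hf.integral_norm_smul_le hφ hC x

lemma isProbabilityMeasure_mixMeasure (hf : IsDensityKernel ν f) (P : Measure X)
    [IsProbabilityMeasure P] : IsProbabilityMeasure (mixMeasure ν f P) := by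
  have hi : Integrable (Function.uncurry f) (ν.prod P) := by
    simpa [Function.uncurry_def] using hf.integrable_prod (φ := fun _ : Y => (1 : ℝ)) (C := 1)
      stronglyMeasurable_const (by simp) P
  have h1 : ∫ y, mixDensity f P y ∂ν = 1 := by
    unfold mixDensity
    rw [integral_integral_swap hi]
    simp [hf.integral_one]
  have hint : Integrable (mixDensity f P) ν := hi.integral_prod_left
  constructor
  rw [mixMeasure, withDensity_apply _ MeasurableSet.univ, Measure.restrict_univ,
    ← ofReal_integral_eq_lintegral_ofReal hint
      (Eventually.of_forall (mixDensity_nonneg hf P)), h1, ENNReal.ofReal_one]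

variable [CompleteSpace H]

/-- By Fubini, embedding the mixture of `P` under `φ` is the same as embedding `P` under the
averaged feature map. -/
lemma integral_mixMeasure (hf : IsDensityKernel ν f)
    (hφ : StronglyMeasurable φ) (hC : ∀ y, ‖φ y‖ ≤ C) (P : Measure X) [IsProbabilityMeasure P] :
    ∫ y, φ y ∂(mixMeasure ν f P) = ∫ x, mixFeature ν f φ x ∂P := by
  have hd := mixDensity_measurable hf P
  rw [mixMeasure, integral_withDensity_eq_integral_toReal_smul hd.ennreal_ofReal
    (Eventually.of_forall fun y => ENNReal.ofReal_lt_top)]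
  simp_rw [ENNReal.toReal_ofReal (mixDensity_nonneg hf P _), mixDensity, ← integral_smul_const,
    mixFeature]
  exact integral_integral_swap (hf.integrable_prod hφ hC P)

end MixtureEmbedding

/-- Feature maps of a kernel bounded by `C` are bounded by `√C`. -/
lemma FeatureMap.norm_le {Z H : Type*} [MeasurableSpace Z] [NormedAddCommGroup H]
    [InnerProductSpace ℝ H] {k : Z → Z → ℝ} (F : FeatureMap k H) {C : ℝ}
    (hC : ∀ x, k x x ≤ C) (x : Z) : ‖F.toFun x‖ ≤ √C := by
  apply Real.le_sqrt_of_sq_le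
  rw [← real_inner_self_eq_norm_sq, F.repro]
  exact hC x

/-- The correlation coefficient `η V / (√(λ₁ V) √(λ₂ V))` does not depend on `V > 0`. -/
lemma corr_cancel {η l₁ l₂ V : ℝ} (h₁ : 0 < l₁) (h₂ : 0 < l₂) (hV : 0 < V) :
    η * V / (√(l₁ * V) * √(l₂ * V)) = η / (√l₁ * √l₂) := by
  rw [Real.sqrt_mul h₁.le, Real.sqrt_mul h₂.le]
  have e : √l₁ * √V * (√l₂ * √V) = (√l₁ * √l₂) * V := by
    rw [mul_mul_mul_comm, Real.mul_self_sqrt hV.le]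
  rw [e, mul_div_mul_right _ _ hV.ne']

/-! ### Equality of the correlations -/

theorem stmt_15
    {X : Type*} [TopologicalSpace X] [PolishSpace X] [LocallyCompactSpace X]
    [MeasurableSpace X] [BorelSpace X]
    {Y : Type*} [TopologicalSpace Y] [PolishSpace Y] [LocallyCompactSpace Y]
    [MeasurableSpace Y] [BorelSpace Y]
    (ν : Measure Y) [SigmaFinite ν]
    {Ω : Type*} [MeasurableSpace Ω] (Pr : Measure Ω) [IsProbabilityMeasure Pr]
    (P₁ P₂ : Ω → Measure X)
    (hP₁ : ∀ ω, IsProbabilityMeasure (P₁ ω)) (hP₂ : ∀ ω, IsProbabilityMeasure (P₂ ω))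
    (hP₁m : Measurable P₁) (hP₂m : Measurable P₂)
    -- `P̃₁` and `P̃₂` are not deterministic
    (hnd₁ : ¬ ∃ Q : Measure X, ∀ᵐ ω ∂Pr, P₁ ω = Q)
    (hnd₂ : ¬ ∃ Q : Measure X, ∀ᵐ ω ∂Pr, P₂ ω = Q)
    -- common mean measure `P₀` and structural covariance/variance assumptions
    (P₀ : Measure X) (hP₀₁ : Pr.bind P₁ = P₀) (hP₀₂ : Pr.bind P₂ = P₀)
    (η : ℝ) (hη : η ∈ Set.Icc (-1 : ℝ) 1)
    (hcov : ∀ A : Set X, MeasurableSet A →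
      rCov Pr (fun ω => (P₁ ω A).toReal) (fun ω => (P₂ ω A).toReal)
        = η * ((P₀ A).toReal * (1 - (P₀ A).toReal)))
    (lam₁ lam₂ : ℝ) (hlam₁ : lam₁ ∈ Set.Ioc (0 : ℝ) 1) (hlam₂ : lam₂ ∈ Set.Ioc (0 : ℝ) 1)
    (hvar₁ : ∀ A : Set X, MeasurableSet A →
      rVar Pr (fun ω => (P₁ ω A).toReal) = lam₁ * ((P₀ A).toReal * (1 - (P₀ A).toReal)))
    (hvar₂ : ∀ A : Set X, MeasurableSet A →
      rVar Pr (fun ω => (P₂ ω A).toReal) = lam₂ * ((P₀ A).toReal * (1 - (P₀ A).toReal)))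
    -- an identifiable probability density kernel
    (f : Y → X → ℝ) (hf : IsDensityKernel ν f) (hident : Identifiable ν f)
    -- a characteristic kernel `k` on `Y`, with realizations of the RKHSs of `k` and `k_f`
    {k : Y → Y → ℝ} (hk : IsKernel k) (hkchar : IsCharacteristic k)
    {H : Type*} [NormedAddCommGroup H] [InnerProductSpace ℝ H] [CompleteSpace H]
    (F : FeatureMap k H)
    {H' : Type*} [NormedAddCommGroup H'] [InnerProductSpace ℝ H'] [CompleteSpace H']
    (G : FeatureMap (updatedKernel ν k f) H')
    -- a set on which `P̃₁(A)` and `P̃₂(A)` are not deterministic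
    (A : Set X) (hA : MeasurableSet A)
    (hndA₁ : ¬ ∃ c : ℝ, ∀ᵐ ω ∂Pr, (P₁ ω A).toReal = c)
    (hndA₂ : ¬ ∃ c : ℝ, ∀ᵐ ω ∂Pr, (P₂ ω A).toReal = c) :
    kerCorr F Pr (fun ω => mixMeasure ν f (P₁ ω)) (fun ω => mixMeasure ν f (P₂ ω))
        = kerCorr G Pr P₁ P₂ ∧
    kerCorr G Pr P₁ P₂
        = rCorr Pr (fun ω => (P₁ ω A).toReal) (fun ω => (P₂ ω A).toReal) := by
  obtain ⟨CK, hCK⟩ := hk.bounded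
  have hFC : ∀ y, ‖F.toFun y‖ ≤ √CK :=
    F.norm_le fun y => (le_abs_self _).trans (hCK y y)
  set ψ : X → H := mixFeature ν f F.toFun with hψdef
  have hψm : StronglyMeasurable ψ := mixFeature_stronglyMeasurable hf F.stronglyMeasurable
  have hψC : ∀ x, ‖ψ x‖ ≤ √CK := norm_mixFeature_le hf F.stronglyMeasurable hFC
  have hψG : ∀ x x', ⟪ψ x, ψ x'⟫ = ⟪G.toFun x, G.toFun x'⟫ := fun x x' => by
    rw [G.repro, hψdef, inner_mixFeature F hf hFC]
  have hGC : ∀ x, ‖G.toFun x‖ ≤ √CK := fun x => by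
    have := hψG x x
    rw [real_inner_self_eq_norm_sq, real_inner_self_eq_norm_sq] at this
    rw [← (pow_left_inj₀ (norm_nonneg _) (norm_nonneg _) two_ne_zero).1 this]
    exact hψC x
  let κ₁ : Kernel Ω X := ⟨P₁, hP₁m⟩
  let κ₂ : Kernel Ω X := ⟨P₂, hP₂m⟩
  have : IsMarkovKernel κ₁ := ⟨hP₁⟩
  have : IsMarkovKernel κ₂ := ⟨hP₂⟩
  have hP₀ : IsProbabilityMeasure P₀ := by
    rw [← hP₀₁]
    exact (inferInstance : IsProbabilityMeasure (Pr.bind κ₁))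
  set V : ℝ := ∫ x, ⟪G.toFun x, G.toFun x⟫ ∂P₀
    - ∫ z, ⟪G.toFun z.1, G.toFun z.2⟫ ∂(P₀.prod P₀) with hV
  have embF : ∀ P : Measure X, IsProbabilityMeasure P →
      meanEmb F (mixMeasure ν f P) = ∫ x, ψ x ∂P := fun P _ =>
    integral_mixMeasure hf F.stronglyMeasurable hFC P
  have covG : kerCov G Pr P₁ P₂ = η * V :=
    cov_embedding Pr κ₁ κ₂ P₀ hP₀₁ hP₀₂ η hη.2 hcov G.stronglyMeasurable hGC
  have varG₁ : kerVar G Pr P₁ = lam₁ * V :=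
    cov_embedding Pr κ₁ κ₁ P₀ hP₀₁ hP₀₁ lam₁ hlam₁.2 hvar₁ G.stronglyMeasurable hGC
  have varG₂ : kerVar G Pr P₂ = lam₂ * V :=
    cov_embedding Pr κ₂ κ₂ P₀ hP₀₂ hP₀₂ lam₂ hlam₂.2 hvar₂ G.stronglyMeasurable hGC
  have covF : kerCov F Pr (fun ω => mixMeasure ν f (P₁ ω)) (fun ω => mixMeasure ν f (P₂ ω))
      = η * V := by
    simp only [kerCov, embF _ (hP₁ _), embF _ (hP₂ _), hV, ← hψG]
    exact cov_embedding Pr κ₁ κ₂ P₀ hP₀₁ hP₀₂ η hη.2 hcov hψm hψC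
  have varF₁ : kerVar F Pr (fun ω => mixMeasure ν f (P₁ ω)) = lam₁ * V := by
    simp only [kerVar, kerCov, embF _ (hP₁ _), hV, ← hψG]
    exact cov_embedding Pr κ₁ κ₁ P₀ hP₀₁ hP₀₁ lam₁ hlam₁.2 hvar₁ hψm hψC
  have varF₂ : kerVar F Pr (fun ω => mixMeasure ν f (P₂ ω)) = lam₂ * V := by
    simp only [kerVar, kerCov, embF _ (hP₂ _), hV, ← hψG]
    exact cov_embedding Pr κ₂ κ₂ P₀ hP₀₂ hP₀₂ lam₂ hlam₂.2 hvar₂ hψm hψC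
  have hV0 : 0 ≤ V := by
    have h : 0 ≤ kerVar G Pr P₁ := integral_nonneg fun ω => real_inner_self_nonneg
    rw [varG₁] at h
    exact nonneg_of_mul_nonneg_right h hlam₁.1
  -- If `V = 0`, the embedded mixture is a.s. constant, and injectivity of the embedding and
  -- identifiability force `P₁ = P₀` almost surely.
  have hVpos : 0 < V := by
    refine lt_of_le_of_ne hV0 fun hV' => hnd₁ ⟨P₀, ?_⟩
    have hz : ∫ ω, ⟪∫ x, ψ x ∂(κ₁ ω) - ∫ ω', ∫ x, ψ x ∂(κ₁ ω') ∂Pr,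
        ∫ x, ψ x ∂(κ₁ ω) - ∫ ω', ∫ x, ψ x ∂(κ₁ ω') ∂Pr⟫ ∂Pr = 0 := by
      rw [cov_embedding Pr κ₁ κ₁ P₀ hP₀₁ hP₀₁ lam₁ hlam₁.2 hvar₁ hψm hψC]
      simp only [hψG]
      rw [← hV, ← hV', mul_zero]
    have hmean : ∫ ω', ∫ x, ψ x ∂(κ₁ ω') ∂Pr = ∫ x, ψ x ∂P₀ := by
      have hb : Pr.bind κ₁ = P₀ := hP₀₁
      rw [← integral_bind_kernel Pr κ₁ (integrable_of_bdd hψm hψC), hb]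
    rw [hmean] at hz
    have hm : StronglyMeasurable fun ω => ∫ x, ψ x ∂(κ₁ ω) - ∫ x, ψ x ∂P₀ :=
      hψm.integral_kernel.sub stronglyMeasurable_const
    have hb : ∀ ω, ‖∫ x, ψ x ∂(κ₁ ω) - ∫ x, ψ x ∂P₀‖ ≤ √CK + √CK := fun ω =>
      (norm_sub_le _ _).trans (add_le_add (norm_integral_le_bdd hψC) (norm_integral_le_bdd hψC))
    rw [integral_eq_zero_iff_of_nonneg (fun ω => real_inner_self_nonneg)] at hz
    · filter_upwards [hz] with ω hω
      have hω' : ∫ x, ψ x ∂(P₁ ω) = ∫ x, ψ x ∂P₀ := sub_eq_zero.1 (inner_self_eq_zero.1 hω)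
      rw [← embF _ (hP₁ ω), ← embF _ hP₀] at hω'
      have p1 := hP₁ ω
      have q1 := isProbabilityMeasure_mixMeasure hf (P₁ ω)
      have q0 := isProbabilityMeasure_mixMeasure hf P₀
      have emb : ∀ (Q : Measure Y) [IsProbabilityMeasure Q] (y : Y),
          ∫ x, k x y ∂Q = ⟪F.toFun y, meanEmb F Q⟫ := fun Q _ y => by
        rw [meanEmb, ← integral_inner (integrable_of_bdd F.stronglyMeasurable hFC)]
        simp only [F.repro]
        exact integral_congr_ae (Eventually.of_forall fun x => hk.symm x y)
      have hmix : mixMeasure ν f (P₁ ω) = mixMeasure ν f P₀ :=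
        hkchar _ _ q1 q0 fun y => by rw [emb, emb, hω']
      rw [mixMeasure, mixMeasure, withDensity_eq_iff_of_sigmaFinite
        (mixDensity_measurable hf _).ennreal_ofReal.aemeasurable
        (mixDensity_measurable hf _).ennreal_ofReal.aemeasurable] at hmix
      refine hident _ _ (hP₁ ω) hP₀ ?_
      filter_upwards [hmix] with y hy
      exact (ENNReal.ofReal_eq_ofReal_iff (mixDensity_nonneg hf _ y)
        (mixDensity_nonneg hf _ y)).1 hy
    · refine Integrable.of_bound (hm.inner hm).aestronglyMeasurable
        ((√CK + √CK) * (√CK + √CK)) (Eventually.of_forall fun ω => ?_)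
      exact (norm_inner_le_norm _ _).trans
        (mul_le_mul (hb ω) (hb ω) (norm_nonneg _) (by positivity))
  set p : ℝ := (P₀ A).toReal with hp
  have hp0 : 0 ≤ p := ENNReal.toReal_nonneg
  have hp1 : p ≤ 1 := measureReal_le_one (μ := P₀) (s := A)
  -- A vanishing `P₀(A)(1 - P₀(A))` would make the variance of `P₁(A)` zero.
  have hppos : 0 < p * (1 - p) := by
    refine lt_of_le_of_ne (mul_nonneg hp0 (by linarith)) fun h0 =>
      hndA₁ ⟨∫ ω', (P₁ ω' A).toReal ∂Pr, ?_⟩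
    have hz := hvar₁ A hA
    rw [← hp, ← h0, mul_zero] at hz
    have hU : Measurable fun ω => (P₁ ω A).toReal :=
      (κ₁.measurable_coe hA).ennreal_toReal
    have hUb : ∀ ω, ‖(P₁ ω A).toReal‖ ≤ 1 := fun ω => by
      have := hP₁ ω
      rw [Real.norm_of_nonneg ENNReal.toReal_nonneg]
      exact measureReal_le_one
    simp only [rVar, rCov] at hz
    rw [integral_eq_zero_iff_of_nonneg (fun ω => mul_self_nonneg _)] at hz
    · filter_upwards [hz] with ω hω
      exact sub_eq_zero.1 (mul_self_eq_zero.1 hω)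
    · have hm := (hU.sub_const (∫ ω', (P₁ ω' A).toReal ∂Pr)).stronglyMeasurable
      refine Integrable.of_bound (hm.mul hm).aestronglyMeasurable ((1 + 1) * (1 + 1))
        (Eventually.of_forall fun ω => ?_)
      have hb : ‖(P₁ ω A).toReal - ∫ ω', (P₁ ω' A).toReal ∂Pr‖ ≤ 1 + 1 :=
        (norm_sub_le _ _).trans (add_le_add (hUb ω) (norm_integral_le_bdd hUb))
      rw [norm_mul]
      exact mul_le_mul hb hb (norm_nonneg _) (by norm_num)
  simp only [kerCorr, rCorr]
  rw [covF, varF₁, varF₂, covG, varG₁, varG₂, hcov A hA, hvar₁ A hA, hvar₂ A hA, ← hp,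
    corr_cancel hlam₁.1 hlam₂.1 hVpos, corr_cancel hlam₁.1 hlam₂.1 hppos]
  exact ⟨rfl, rfl⟩

end
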